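/- One has lim_{ξ→∞} √ξ · ∫₀^∞ (1 − e^{−ζ}) / (2ζ + ξ(1 − e^{−ζ}))^{3/2} dζ = 1; equivalently, √ξ · ψ_∞′(ξ) → 1 as ξ → ∞, where ψ_∞′(ξ) = ∫₀^∞ (1 − e^{−ζ})/h(ζ,ξ)^{3/2} dζ and h(ζ,ξ) = 2ζ + ξ(1 − e^{−ζ}). -/

import Mathlib

/-!
The substitution `ζ = ξ s` removes the prefactor: for `ξ > 0` the quantity in question equals
`∫₀^∞ a / (2s + a)^(3/2) ds` with `a = 1 - e^(-ξ s)` (`sqrt_mul_integral_eq`). As `ξ → ∞`, `a → 1`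
pointwise, and since `0 ≤ a ≤ 1` the integrand is dominated by `s^(-1/2)` on `(0, 1]` and by
`s^(-3/2)` on `(1, ∞)` (`integrand_le_bound`), so dominated convergence gives the limit
`∫₀^∞ (2s + 1)^(-3/2) ds = 1` (`integral_limit`).
-/

open Real Set MeasureTheory Filter

/-- An integrable majorant on `(0, ∞)`, uniform in `ξ`, of the rescaled integrands. -/
noncomputable def bound (s : ℝ) : ℝ :=
  if s ≤ 1 then s ^ (-(1:ℝ)/2) else s ^ (-(3:ℝ)/2)

lemma integrableOn_bound : IntegrableOn bound (Ioi 0) := by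
  rw [← Ioc_union_Ioi_eq_Ioi (zero_le_one' ℝ)]
  refine IntegrableOn.union ?_ ?_
  · have h : IntegrableOn (fun s : ℝ => s ^ (-(1:ℝ)/2)) (Ioc 0 1) := by
      rw [← intervalIntegrable_iff_integrableOn_Ioc_of_le zero_le_one]
      exact intervalIntegral.intervalIntegrable_rpow' (by norm_num)
    refine h.congr_fun (fun s hs => ?_) measurableSet_Ioc
    simp [bound, hs.2]
  · have h : IntegrableOn (fun s : ℝ => s ^ (-(3:ℝ)/2)) (Ioi 1) :=
      integrableOn_Ioi_rpow_of_lt (by norm_num) one_pos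
    refine h.congr_fun (fun s hs => ?_) measurableSet_Ioi
    simp [bound, not_le.mpr (mem_Ioi.mp hs)]

lemma integrand_le_bound {s a : ℝ} (hs : 0 < s) (ha : 0 ≤ a) (ha' : a ≤ 1) :
    a / (2 * s + a) ^ ((3:ℝ)/2) ≤ bound s := by
  have hp : 0 < 2 * s + a := by linarith
  unfold bound
  split_ifs with h
  · calc a / (2 * s + a) ^ ((3:ℝ)/2) ≤ (2 * s + a) / (2 * s + a) ^ ((3:ℝ)/2) := by
          gcongr; linarith
      _ = (2 * s + a) ^ (-(1:ℝ)/2) := by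
          rw [show (-(1:ℝ)/2) = 1 - 3/2 by norm_num, rpow_sub hp, rpow_one]
      _ ≤ s ^ (-(1:ℝ)/2) :=
          rpow_le_rpow_of_nonpos hs (by linarith) (by norm_num)
  · calc a / (2 * s + a) ^ ((3:ℝ)/2) ≤ 1 / (2 * s + a) ^ ((3:ℝ)/2) := by gcongr
      _ = (2 * s + a) ^ (-(3:ℝ)/2) := by
          rw [show (-(3:ℝ)/2) = -(3/2) by norm_num, rpow_neg hp.le, one_div]
      _ ≤ s ^ (-(3:ℝ)/2) :=
          rpow_le_rpow_of_nonpos hs (by linarith) (by norm_num)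

lemma integral_limit : ∫ s in Ioi (0:ℝ), 1 / (2 * s + 1) ^ ((3:ℝ)/2) = 1 := by
  have hd : ∀ x ∈ Ici (0:ℝ), HasDerivAt (fun s : ℝ => -(2 * s + 1) ^ (-(1:ℝ)/2))
      (1 / (2 * x + 1) ^ ((3:ℝ)/2)) x := by
    intro x hx
    have hx0 : (0:ℝ) ≤ x := hx
    have hp : 0 < 2 * x + 1 := by linarith
    have h1 : HasDerivAt (fun s : ℝ => 2 * s + 1) 2 x := by
      simpa using ((hasDerivAt_id x).const_mul 2).add_const 1
    refine (h1.rpow_const (p := -(1:ℝ)/2) (Or.inl hp.ne')).neg.congr_deriv ?_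
    rw [show (-(1:ℝ)/2 - 1) = -(3/2) by norm_num, rpow_neg hp.le]
    ring
  have ht : Tendsto (fun s : ℝ => -(2 * s + 1) ^ (-(1:ℝ)/2)) atTop (nhds 0) := by
    have h1 : Tendsto (fun s : ℝ => 2 * s + 1) atTop atTop :=
      tendsto_atTop_add_const_right _ _ (tendsto_id.const_mul_atTop two_pos)
    have h2 := ((tendsto_rpow_neg_atTop (y := (1:ℝ)/2) (by norm_num)).comp h1).neg
    simpa [Function.comp_def, neg_div] using h2
  rw [integral_Ioi_of_hasDerivAt_of_nonneg' hd (fun x hx => ?_) ht]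
  · simp
  · have : (0:ℝ) < x := hx
    positivity

lemma sqrt_mul_integral_eq {ξ : ℝ} (hξ : 0 < ξ) :
    Real.sqrt ξ * ∫ ζ in Ioi (0:ℝ),
        (1 - Real.exp (-ζ)) / (2 * ζ + ξ * (1 - Real.exp (-ζ))) ^ ((3:ℝ)/2)
      = ∫ s in Ioi (0:ℝ),
        (1 - Real.exp (-(ξ * s))) / (2 * s + (1 - Real.exp (-(ξ * s)))) ^ ((3:ℝ)/2) := by
  have h := integral_comp_mul_left_Ioi (fun ζ : ℝ =>
    (1 - Real.exp (-ζ)) / (2 * ζ + ξ * (1 - Real.exp (-ζ))) ^ ((3:ℝ)/2)) 0 hξ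
  rw [mul_zero, smul_eq_mul] at h
  have h' := (eq_inv_mul_iff_mul_eq₀ hξ.ne').mp h
  rw [← h', ← mul_assoc, ← integral_const_mul]
  refine setIntegral_congr_fun measurableSet_Ioi (fun s hs => ?_)
  have hs0 : (0:ℝ) < s := hs
  have ha : 0 ≤ 1 - Real.exp (-(ξ * s)) := by
    have : Real.exp (-(ξ * s)) ≤ 1 := exp_le_one_iff.mpr (by nlinarith)
    linarith
  have hp : 0 < 2 * s + (1 - Real.exp (-(ξ * s))) := by linarith
  have hξ' : √ξ * ξ = ξ ^ ((3:ℝ)/2) := by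
    rw [show ((3:ℝ)/2) = 1/2 + 1 by norm_num, rpow_add hξ, rpow_one, ← sqrt_eq_rpow]
  rw [show 2 * (ξ * s) + ξ * (1 - Real.exp (-(ξ * s)))
      = ξ * (2 * s + (1 - Real.exp (-(ξ * s)))) by ring, mul_rpow hξ.le hp.le, hξ']
  have := rpow_pos_of_pos hξ ((3:ℝ)/2)
  have := rpow_pos_of_pos hp ((3:ℝ)/2)
  field_simp

/-- `√ξ · ∫₀^∞ (1 − e^(−ζ)) / (2ζ + ξ(1 − e^(−ζ)))^(3/2) dζ → 1` as `ξ → ∞`; that is,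
`√ξ · ψ_∞′(ξ) → 1` where `ψ_∞′(ξ) = ∫₀^∞ (1 − e^(−ζ))/h(ζ,ξ)^(3/2) dζ`. -/
theorem stmt19 :
    Tendsto (fun ξ : ℝ => Real.sqrt ξ *
        ∫ ζ in Ioi (0:ℝ),
          (1 - Real.exp (-ζ)) / (2 * ζ + ξ * (1 - Real.exp (-ζ))) ^ ((3:ℝ)/2))
      atTop (nhds 1) := by
  have key : Tendsto (fun ξ : ℝ => ∫ s in Ioi (0:ℝ),
      (1 - Real.exp (-(ξ * s))) / (2 * s + (1 - Real.exp (-(ξ * s)))) ^ ((3:ℝ)/2))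
      atTop (nhds (∫ s in Ioi (0:ℝ), 1 / (2 * s + 1) ^ ((3:ℝ)/2))) := by
    refine tendsto_integral_filter_of_dominated_convergence bound ?_ ?_ integrableOn_bound ?_
    · exact Eventually.of_forall fun ξ => (by fun_prop : Measurable _).aestronglyMeasurable
    · filter_upwards [eventually_gt_atTop 0] with ξ hξ
      filter_upwards [ae_restrict_mem measurableSet_Ioi] with s hs
      have hs0 : (0:ℝ) < s := hs
      have h1 : Real.exp (-(ξ * s)) ≤ 1 := exp_le_one_iff.mpr (by nlinarith)
      have h2 := Real.exp_pos (-(ξ * s))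
      have ha : 0 ≤ 1 - Real.exp (-(ξ * s)) := by linarith
      rw [Real.norm_of_nonneg (by positivity)]
      exact integrand_le_bound hs0 ha (by linarith)
    · filter_upwards [ae_restrict_mem measurableSet_Ioi] with s hs
      have hs0 : (0:ℝ) < s := hs
      have h1 : Tendsto (fun ξ : ℝ => 1 - Real.exp (-(ξ * s))) atTop (nhds 1) := by
        have := (tendsto_exp_neg_atTop_nhds_zero.comp
          (tendsto_id.atTop_mul_const hs0)).const_sub 1
        simpa [Function.comp_def] using this
      have hp : 0 < 2 * s + 1 := by linarith
      exact h1.div ((h1.const_add (2 * s)).rpow_const (Or.inl hp.ne'))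
        (rpow_pos_of_pos hp _).ne'
  rw [integral_limit] at key
  refine key.congr' ?_
  filter_upwards [eventually_gt_atTop 0] with ξ hξ
  exact (sqrt_mul_integral_eq hξ).symm
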